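/- For all integers m, n ≥ 1, χ_la(P_{2m} ∨ K_{2n}) = 2n + 2. -/

import Mathlib

open Finset SimpleGraph
open scoped Classical

/-- The induced vertex label (weight) of `x`: the sum of `f` over all edges incident to `x`. -/
noncomputable def vertexWeight {V : Type*} [Fintype V] (G : SimpleGraph V)
    (f : Sym2 V → ℕ) (x : V) : ℕ :=
  ∑ e ∈ G.edgeFinset.filter (fun e => x ∈ e), f e

/-- `f` is a local antimagic labeling of `G`: it restricts to a bijection from the edge set of
`G` onto `{1, …, q}` (where `q` is the number of edges), and adjacent vertices get distinct
induced vertex labels. -/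
def IsLocalAntimagic {V : Type*} [Fintype V] (G : SimpleGraph V) (f : Sym2 V → ℕ) : Prop :=
  Set.BijOn f G.edgeSet (Set.Icc 1 G.edgeSet.ncard) ∧
  ∀ ⦃x y : V⦄, G.Adj x y → vertexWeight G f x ≠ vertexWeight G f y

/-- The number of distinct induced vertex labels, `c(f)`. -/
noncomputable def colorCount {V : Type*} [Fintype V] (G : SimpleGraph V)
    (f : Sym2 V → ℕ) : ℕ :=
  (Finset.univ.image (vertexWeight G f)).card

/-- The local antimagic chromatic number `χ_la(G)`. -/
noncomputable def chiLA {V : Type*} [Fintype V] (G : SimpleGraph V) : ℕ :=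
  sInf { n | ∃ f : Sym2 V → ℕ, IsLocalAntimagic G f ∧ colorCount G f = n }

/-- The join `G ∨ H` of two vertex-disjoint graphs. -/
def joinG {α β : Type*} (G : SimpleGraph α) (H : SimpleGraph β) : SimpleGraph (α ⊕ β) :=
  SimpleGraph.fromRel (fun x y =>
    (∃ a b, x = Sum.inl a ∧ y = Sum.inl b ∧ G.Adj a b) ∨
    (∃ a b, x = Sum.inr a ∧ y = Sum.inr b ∧ H.Adj a b) ∨
    (∃ a b, x = Sum.inl a ∧ y = Sum.inr b))

/-! Lower bound: two adjacent path vertices together with `K_{2n}` form a clique, and the weights of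
a local antimagic labeling are a proper coloring.

Upper bound: the smallest labels go to the path, in the order `2m - 1, 1, 2m - 2, 2, …`, so that
its vertices have weights `2m - 1` and `2m` alternately, except for weight `m` at the last one. Each
vertex of `K_{2n}` receives a block of `2m` consecutive labels on its cross edges. Traversing
consecutive blocks in opposite orders balances their contributions to the path vertices. In the last
block a cyclic shift raises the label at the end of the path by `m` and lowers those at the even
vertices by `1`, which makes the weights depend only on parity along the path. The edges inside
`K_{2n}` get the largest labels in colexicographic order, so that the weights on `K_{2n}` are
strictly increasing and exceed those on the path. -/

theorem bijOn_union_of_disjoint {α β : Type*} {f : α → β} {s s' : Set α} {t t' : Set β}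
    (h : Set.BijOn f s t) (h' : Set.BijOn f s' t') (ht : Disjoint t t') :
    Set.BijOn f (s ∪ s') (t ∪ t') := by
  have hs : Disjoint s s' := .of_image (by rwa [h.image_eq, h'.image_eq])
  refine h.union h' ((Set.injOn_union hs).2 ⟨h.injOn, h'.injOn, ?_⟩)
  exact fun x hx y hy => ht.ne_of_mem (h.mapsTo hx) (h'.mapsTo hy)

section General

variable {V : Type*} [Fintype V] {G : SimpleGraph V} {f : Sym2 V → ℕ}

theorem vertexWeight_eq_sum_adj (G : SimpleGraph V) (f : Sym2 V → ℕ) (x : V) :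
    vertexWeight G f x = ∑ y with G.Adj x y, f s(x, y) := by
  unfold vertexWeight
  symm
  refine Finset.sum_bij (fun y _ => s(x, y)) (fun y hy => by simpa using hy)
    (fun _ _ _ _ h => Sym2.congr_right.1 h) (fun e he => ?_) (fun _ _ => rfl)
  obtain ⟨heG, hxe⟩ := Finset.mem_filter.1 he
  obtain ⟨y, rfl⟩ := hxe
  exact ⟨y, by simpa using heG, rfl⟩

theorem vertexWeight_top_eq_sum_erase (f : Sym2 V → ℕ) (x : V) :
    vertexWeight ⊤ f x = ∑ y ∈ univ.erase x, f s(x, y) := by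
  rw [vertexWeight_eq_sum_adj]
  congr 1
  ext y
  simp [eq_comm]

theorem vertexWeight_top_le_of_forall_le {x y : V}
    (h : ∀ z, z ≠ x → z ≠ y → f s(x, z) ≤ f s(y, z)) :
    vertexWeight ⊤ f x ≤ vertexWeight ⊤ f y := by
  obtain rfl | hxy := eq_or_ne x y
  · rfl
  rw [vertexWeight_top_eq_sum_erase, vertexWeight_top_eq_sum_erase,
    ← add_sum_erase (univ.erase x) _ (mem_erase.2 ⟨hxy.symm, mem_univ y⟩),
    ← add_sum_erase (univ.erase y) _ (mem_erase.2 ⟨hxy, mem_univ x⟩), erase_right_comm,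
    Sym2.eq_swap]
  gcongr with z hz
  simp only [mem_erase] at hz
  exact h z hz.1 hz.2.1

theorem isLocalAntimagic_of_bijOn_Ioc {q : ℕ} (hf : Set.BijOn f G.edgeSet (Set.Ioc 0 q))
    (hw : ∀ ⦃x y⦄, G.Adj x y → vertexWeight G f x ≠ vertexWeight G f y) :
    IsLocalAntimagic G f := by
  have hq : G.edgeSet.ncard = q := by
    rw [hf.ncard_eq, ← Finset.coe_Ioc, Set.ncard_coe_finset, Nat.card_Ioc, Nat.sub_zero]
  refine ⟨?_, hw⟩
  rwa [hq, ← zero_add 1, Set.Icc_add_one_left_eq_Ioc]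

theorem IsLocalAntimagic.chromaticNumber_le_colorCount (hf : IsLocalAntimagic G f) :
    G.chromaticNumber ≤ colorCount G f := by
  let C : G.Coloring (univ.image (vertexWeight G f)) :=
    Coloring.mk (fun x => ⟨vertexWeight G f x, mem_image_of_mem _ (mem_univ x)⟩)
      fun hxy h => hf.2 hxy (congrArg Subtype.val h)
  simpa [colorCount] using C.colorable.chromaticNumber_le

theorem chiLA_eq_of_isNClique {k : ℕ} {s : Finset V} (hs : G.IsNClique k s)
    (hf : IsLocalAntimagic G f) (hk : colorCount G f ≤ k) : chiLA G = k := by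
  have lower {f' : Sym2 V → ℕ} (hf' : IsLocalAntimagic G f') : k ≤ colorCount G f' := by
    have h := hs.isClique.card_le_chromaticNumber.trans hf'.chromaticNumber_le_colorCount
    rw [hs.card_eq] at h
    exact_mod_cast h
  refine le_antisymm (Nat.sInf_le ⟨f, hf, hk.antisymm (lower hf)⟩) ?_
  refine le_csInf ⟨_, f, hf, rfl⟩ ?_
  rintro _ ⟨f', hf', rfl⟩
  exact lower hf'

end General

section Join

variable {α β : Type*} {G : SimpleGraph α} {H : SimpleGraph β}

@[simp]
theorem joinG_adj_inl_inl {a a' : α} :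
    (joinG G H).Adj (Sum.inl a) (Sum.inl a') ↔ G.Adj a a' := by
  simpa [joinG, G.adj_comm a' a] using fun h : G.Adj a a' => h.ne

@[simp]
theorem joinG_adj_inr_inr {b b' : β} :
    (joinG G H).Adj (Sum.inr b) (Sum.inr b') ↔ H.Adj b b' := by
  simpa [joinG, H.adj_comm b' b] using fun h : H.Adj b b' => h.ne

@[simp]
theorem joinG_adj_inl_inr (a : α) (b : β) : (joinG G H).Adj (Sum.inl a) (Sum.inr b) := by
  simp [joinG]

@[simp]
theorem joinG_adj_inr_inl (a : α) (b : β) : (joinG G H).Adj (Sum.inr b) (Sum.inl a) :=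
  (joinG_adj_inl_inr a b).symm

theorem edgeSet_joinG : (joinG G H).edgeSet =
    Sym2.map Sum.inl '' G.edgeSet ∪ (fun p : α × β => s(Sum.inl p.1, Sum.inr p.2)) '' Set.univ ∪
      Sym2.map Sum.inr '' H.edgeSet := by
  ext e
  induction e using Sym2.ind with
  | _ x y =>
    rcases x with a | b <;> rcases y with a' | b'
    · rw [← Sym2.map_mk, Set.mem_union, Set.mem_union,
        (Sym2.map.injective Sum.inl_injective).mem_set_image]
      simp [Sym2.exists]
    · simp [Sym2.exists]
    · simp [Sym2.exists]
    · rw [← Sym2.map_mk, Set.mem_union, Set.mem_union,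
        (Sym2.map.injective Sum.inr_injective).mem_set_image]
      simp [Sym2.exists]

theorem isNClique_joinG_disjSum {p q : ℕ} {s : Finset α} {t : Finset β}
    (hs : G.IsNClique p s) (ht : H.IsNClique q t) :
    (joinG G H).IsNClique (p + q) (s.disjSum t) := by
  refine ⟨?_, by rw [card_disjSum, hs.card_eq, ht.card_eq]⟩
  rintro (a | b) hx (a' | b') hy hne
  · simpa using hs.isClique (by simpa using hx) (by simpa using hy) (by simpa using hne)
  · simp
  · simp
  · simpa using ht.isClique (by simpa using hx) (by simpa using hy) (by simpa using hne)

/-- The edge labeling of `G ∨ H` that restricts to `g` on `G`, to `h` on `H`, and gives the cross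
edge `ab` the label `c a b`. -/
def joinLabeling (g : Sym2 α → ℕ) (c : α → β → ℕ) (h : Sym2 β → ℕ) : Sym2 (α ⊕ β) → ℕ :=
  Sym2.lift ⟨fun
    | Sum.inl a, Sum.inl a' => g s(a, a')
    | Sum.inl a, Sum.inr b => c a b
    | Sum.inr b, Sum.inl a => c a b
    | Sum.inr b, Sum.inr b' => h s(b, b'), by
    rintro (a | b) (a' | b') <;> simp only [Sym2.eq_swap]⟩

variable {g : Sym2 α → ℕ} {c : α → β → ℕ} {h : Sym2 β → ℕ}

theorem bijOn_joinLabeling {A B C : Set ℕ} (hg : Set.BijOn g G.edgeSet A)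
    (hc : Set.BijOn (Function.uncurry c) Set.univ B) (hh : Set.BijOn h H.edgeSet C)
    (hAB : Disjoint A B) (hABC : Disjoint (A ∪ B) C) :
    Set.BijOn (joinLabeling g c h) (joinG G H).edgeSet (A ∪ B ∪ C) := by
  have hinl : joinLabeling g c h ∘ Sym2.map Sum.inl = g := funext (Sym2.ind fun _ _ => rfl)
  have hinr : joinLabeling g c h ∘ Sym2.map Sum.inr = h := funext (Sym2.ind fun _ _ => rfl)
  have hcross : Function.Injective fun p : α × β => s(Sum.inl p.1, Sum.inr p.2) := by
    rintro ⟨a, b⟩ ⟨a', b'⟩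
    simp
  have hA := (Set.bijOn_comp_iff (Sym2.map.injective Sum.inl_injective).injOn).1 (hinl ▸ hg)
  have hB := (Set.bijOn_comp_iff (g := joinLabeling g c h) hcross.injOn).1 hc
  have hC := (Set.bijOn_comp_iff (Sym2.map.injective Sum.inr_injective).injOn).1 (hinr ▸ hh)
  rw [edgeSet_joinG]
  exact bijOn_union_of_disjoint (bijOn_union_of_disjoint hA hB hAB) hC hABC

section Weight

variable [Fintype α] [Fintype β]

theorem colorCount_sum_le (K : SimpleGraph (α ⊕ β)) (f : Sym2 (α ⊕ β) → ℕ) :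
    colorCount K f ≤
      (univ.image fun a => vertexWeight K f (Sum.inl a)).card + Fintype.card β := by
  have hsub : univ.image (vertexWeight K f) ⊆ (univ.image fun a => vertexWeight K f (Sum.inl a)) ∪
      univ.image fun b => vertexWeight K f (Sum.inr b) := by
    simp [Finset.image_subset_iff]
  grw [colorCount, hsub, card_union_le, card_image_le (s := (univ : Finset β)), card_univ]

theorem vertexWeight_joinLabeling_inl (a : α) :
    vertexWeight (joinG G H) (joinLabeling g c h) (Sum.inl a) =
      vertexWeight G g a + ∑ b, c a b := by
  simp [vertexWeight_eq_sum_adj, sum_filter, joinLabeling]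

theorem vertexWeight_joinLabeling_inr (b : β) :
    vertexWeight (joinG G H) (joinLabeling g c h) (Sum.inr b) =
      ∑ a, c a b + vertexWeight H h b := by
  simp [vertexWeight_eq_sum_adj, sum_filter, joinLabeling]

theorem vertexWeight_joinLabeling_inl_lt_inr [Nontrivial α] [Nontrivial β]
    (hg : ∀ a a' b, vertexWeight G g a ≤ c a' b)
    (hh : ∀ a b, ∀ e ∈ (⊤ : SimpleGraph β).edgeSet, c a b < h e)
    (a : α) (b : β) :
    vertexWeight (joinG G ⊤) (joinLabeling g c h) (Sum.inl a) <
      vertexWeight (joinG G ⊤) (joinLabeling g c h) (Sum.inr b) := by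
  obtain ⟨a', ha'⟩ := exists_ne a
  obtain ⟨b', hb'⟩ := exists_ne b
  -- Each term of `c a` off the edge `ab` is dominated by an edge of the complete graph at `b`; one
  -- further cross edge at `b` dominates the weight of `a` in `G`.
  have hcol : c a b + vertexWeight G g a ≤ ∑ x, c x b := calc
    c a b + vertexWeight G g a ≤ c a b + c a' b := by grw [hg a a' b]
    _ ≤ ∑ x, c x b :=
      add_le_sum (f := (c · b)) (fun _ _ => Nat.zero_le _) (mem_univ a) (mem_univ a') ha'.symm
  have hrow : ∑ y ∈ univ.erase b, c a y < vertexWeight ⊤ h b := by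
    rw [vertexWeight_top_eq_sum_erase]
    exact sum_lt_sum_of_nonempty ⟨b', by simpa using hb'⟩ fun y hy =>
      hh a y _ (by simpa using (ne_of_mem_erase hy).symm)
  rw [vertexWeight_joinLabeling_inl, vertexWeight_joinLabeling_inr,
    ← add_sum_erase univ _ (mem_univ b)]
  lia

end Weight

end Join

section Zigzag

theorem bijOn_univ_Ioc_of_equiv {ι : Type*} {k : ℕ} (σ : ι ≃ Fin k) (s : ℕ) :
    Set.BijOn (fun i => s + σ i + 1) Set.univ (Set.Ioc s (s + k)) := by
  refine ⟨fun i _ => ?_, fun i _ j _ hij => σ.injective (Fin.ext (by lia)), fun t ht => ?_⟩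
  · simp only [Set.mem_Ioc]
    lia
  · simp only [Set.mem_Ioc] at ht
    exact ⟨σ.symm ⟨t - s - 1, by lia⟩, trivial, by simp only [Equiv.apply_symm_apply]; lia⟩

/-- The zigzag order on `{0, …, k - 1}`, in which `0, 2, 4, …` come first and `…, 5, 3, 1` last:
`zigzag k r` is the position of `r`. -/
def zigzag (k r : ℕ) : ℕ := if r % 2 = 0 then r / 2 else k - 1 - r / 2

/-- `zigzag k` as a permutation of `Fin k`. -/
def zigzagPerm (k : ℕ) : Equiv.Perm (Fin k) where
  toFun r := ⟨zigzag k r, by unfold zigzag; split_ifs <;> lia⟩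
  invFun p := ⟨if 2 * (p : ℕ) < k then 2 * p else 2 * (k - 1 - p) + 1, by split_ifs <;> lia⟩
  left_inv r := by
    ext
    simp only [zigzag]
    split_ifs <;> lia
  right_inv p := by
    ext
    simp only [zigzag]
    split_ifs <;> lia

@[simp]
theorem zigzagPerm_apply {k : ℕ} (r : Fin k) : (zigzagPerm k r : ℕ) = zigzag k r := rfl

end Zigzag

section Path

theorem edgeSet_pathGraph_succ (k : ℕ) :
    (pathGraph (k + 1)).edgeSet = (fun i : Fin k => s(i.castSucc, i.succ)) '' Set.univ := by
  ext e
  induction e using Sym2.ind with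
  | _ x y =>
    simp only [mem_edgeSet, pathGraph_adj, Set.image_univ, Set.mem_range, Sym2.eq_iff, Fin.ext_iff,
      Fin.val_castSucc, Fin.val_succ]
    constructor
    · rintro (h | h)
      · exact ⟨⟨x, by lia⟩, .inl ⟨rfl, h⟩⟩
      · exact ⟨⟨y, by lia⟩, .inr ⟨rfl, h⟩⟩
    · rintro ⟨i, h⟩
      lia

theorem vertexWeight_pathGraph {k : ℕ} (g : ℕ → ℕ) (a : Fin k) :
    vertexWeight (pathGraph k) (fun e => g e.inf) a =
      (if (a : ℕ) + 1 < k then g a else 0) + if 0 < (a : ℕ) then g (a - 1) else 0 := by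
  have hright : ∑ b with (a : ℕ) + 1 = ((b : Fin k) : ℕ), g (min a b : Fin k) =
      if (a : ℕ) + 1 < k then g a else 0 := by
    split_ifs with h
    · have hfilter : ({b : Fin k | (a : ℕ) + 1 = b} : Finset (Fin k)) = {⟨a + 1, h⟩} := by
        ext b
        simp [Fin.ext_iff, eq_comm]
      rw [hfilter, sum_singleton, min_eq_left (Fin.le_def.2 (Nat.le_succ a))]
    · exact sum_eq_zero fun b hb => by
        have := (mem_filter.1 hb).2
        lia
  have hleft : ∑ b with ((b : Fin k) : ℕ) + 1 = (a : ℕ), g (min a b : Fin k) =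
      if 0 < (a : ℕ) then g (a - 1) else 0 := by
    split_ifs with h
    · have hfilter : ({b : Fin k | (b : ℕ) + 1 = a} : Finset (Fin k)) = {⟨a - 1, by lia⟩} := by
        ext b
        simp only [mem_filter_univ, mem_singleton, Fin.ext_iff]
        lia
      rw [hfilter, sum_singleton, min_eq_right (Fin.le_def.2 (Nat.sub_le a 1))]
    · exact sum_eq_zero fun b hb => by
        have := (mem_filter.1 hb).2
        lia
  simp only [vertexWeight_eq_sum_adj, pathGraph_adj, filter_or, Sym2.inf_mk]
  rw [sum_union (disjoint_filter.2 fun b _ => by lia), ← hright, ← hleft]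

/-- The labeling of the path on `k` vertices whose labels along the path are
`k - 1, 1, k - 2, 2, …`. -/
def pathLabeling (k : ℕ) (e : Sym2 (Fin k)) : ℕ := k - 1 - zigzag (k - 1) e.inf

theorem bijOn_pathLabeling (k : ℕ) :
    Set.BijOn (pathLabeling k) (pathGraph k).edgeSet (Set.Ioc 0 (k - 1)) := by
  obtain _ | k := k
  · simp [Subsingleton.elim (pathGraph 0) ⊥]
  have hinj : Function.Injective fun i : Fin k => s(i.castSucc, i.succ) := fun i j hij => by
    simp only [Sym2.eq_iff, Fin.ext_iff, Fin.val_castSucc, Fin.val_succ] at hij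
    lia
  rw [edgeSet_pathGraph_succ, ← Set.bijOn_comp_iff hinj.injOn]
  convert! bijOn_univ_Ioc_of_equiv ((zigzagPerm k).trans Fin.revPerm) 0 using 1
  · ext i
    simp only [pathLabeling, Function.comp_apply, Sym2.inf_mk, Equiv.trans_apply,
      Fin.revPerm_apply, Fin.val_rev, min_eq_left i.castSucc_lt_succ.le, Fin.val_castSucc,
      zigzagPerm_apply]
    have := (zigzagPerm k i).is_lt
    rw [zigzagPerm_apply] at this
    lia
  · simp

theorem vertexWeight_pathLabeling_le {k : ℕ} (a : Fin k) :
    vertexWeight (pathGraph k) (pathLabeling k) a ≤ k := by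
  unfold pathLabeling
  rw [vertexWeight_pathGraph fun i => k - 1 - zigzag (k - 1) i]
  unfold zigzag
  split_ifs <;> lia

end Path

section Complete

/-- The labeling of the complete graph on `Fin k` with the labels `s + 1, s + 2, …`, in the
colexicographic order of the edges. -/
def completeLabeling (k s : ℕ) (e : Sym2 (Fin k)) : ℕ := s + ((e.sup : ℕ).choose 2 + e.inf) + 1

theorem choose_two_add_lt_choose_two {i j k : ℕ} (hij : i < j) (hjk : j < k) :
    j.choose 2 + i < k.choose 2 := calc
  j.choose 2 + i < (j + 1).choose 2 := by rw [Nat.choose_succ_succ' j 1, Nat.choose_one_right]; lia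
  _ ≤ k.choose 2 := Nat.choose_le_choose 2 hjk

theorem choose_two_add_inj {i j i' j' : ℕ} (hij : i < j) (hij' : i' < j')
    (h : j.choose 2 + i = j'.choose 2 + i') : i = i' ∧ j = j' := by
  rcases lt_trichotomy j j' with hj | rfl | hj
  · have := choose_two_add_lt_choose_two hij hj
    lia
  · lia
  · have := choose_two_add_lt_choose_two hij' hj
    lia

theorem inf_lt_sup_of_mem_edgeSet_top {α : Type*} [LinearOrder α] {e : Sym2 α}
    (he : e ∈ (⊤ : SimpleGraph α).edgeSet) : e.inf < e.sup := by
  induction e using Sym2.ind with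
  | _ x y => simpa [eq_comm] using he

theorem bijOn_completeLabeling (k s : ℕ) :
    Set.BijOn (completeLabeling k s) (⊤ : SimpleGraph (Fin k)).edgeSet
      (Set.Ioc s (s + k.choose 2)) := by
  have hmaps : Set.MapsTo (completeLabeling k s) (⊤ : SimpleGraph (Fin k)).edgeSet
      (Set.Ioc s (s + k.choose 2)) := fun e he => by
    have := choose_two_add_lt_choose_two
      (Fin.lt_def.1 (inf_lt_sup_of_mem_edgeSet_top he)) e.sup.is_lt
    simp only [completeLabeling, Set.mem_Ioc]
    lia
  have hinj : Set.InjOn (completeLabeling k s) (⊤ : SimpleGraph (Fin k)).edgeSet :=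
    fun e he e' he' h => by
      simp only [completeLabeling] at h
      obtain ⟨hinf, hsup⟩ := choose_two_add_inj
        (Fin.lt_def.1 (inf_lt_sup_of_mem_edgeSet_top he))
        (Fin.lt_def.1 (inf_lt_sup_of_mem_edgeSet_top he')) (by lia)
      exact Sym2.inf_eq_inf_and_sup_eq_sup.1 ⟨Fin.ext hinf, Fin.ext hsup⟩
  rw [← coe_edgeFinset, ← Finset.coe_Ioc] at hmaps ⊢
  rw [← coe_edgeFinset] at hinj
  refine ⟨hmaps, hinj, surjOn_of_injOn_of_card_le _ hmaps hinj ?_⟩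
  rw [Nat.card_Ioc, card_edgeFinset_top_eq_card_choose_two, Fintype.card_fin,
    Nat.add_sub_cancel_left]

theorem vertexWeight_completeLabeling_mono (k s : ℕ) :
    Monotone (vertexWeight (⊤ : SimpleGraph (Fin k)) (completeLabeling k s)) := by
  refine fun i j hij => vertexWeight_top_le_of_forall_le fun z _ _ => ?_
  simp only [completeLabeling, Sym2.sup_mk, Sym2.inf_mk]
  have hsup : (max i z : Fin k) ≤ max j z := by gcongr
  have hinf : (min i z : Fin k) ≤ min j z := by gcongr
  gcongr <;> assumption

end Complete

section Cross

variable {k l : ℕ}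

/-- The labeling of the edges between `Fin k` and `Fin l` that gives the vertex `b` of `Fin l` the
`b`-th block of `k` labels after `s`, arranged according to the permutation `σ b`. -/
def crossLabeling (s : ℕ) (σ : Fin l → Equiv.Perm (Fin k)) (a : Fin k) (b : Fin l) : ℕ :=
  s + (σ b a + k * b) + 1

theorem bijOn_crossLabeling (s : ℕ) (σ : Fin l → Equiv.Perm (Fin k)) :
    Set.BijOn (Function.uncurry (crossLabeling s σ)) Set.univ (Set.Ioc s (s + l * k)) :=
  bijOn_univ_Ioc_of_equiv
    ((Equiv.prodComm _ _).trans (((Equiv.refl _).prodShear σ).trans finProdFinEquiv)) s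

theorem crossLabeling_lt_crossLabeling (s : ℕ) (σ : Fin l → Equiv.Perm (Fin k)) (a : Fin k)
    {b b' : Fin l} (h : b < b') : crossLabeling s σ a b < crossLabeling s σ a b' := by
  have := Nat.mul_le_mul_left k (Nat.succ_le_of_lt h)
  have := (σ b a).is_lt
  unfold crossLabeling
  lia

/-- The column permutations `π, rev ∘ π, π, rev ∘ π, …, π, π'`: entries of consecutive columns are
complementary, except that the last of the `2 * n` columns is replaced by `π'`. -/
def alternatingColumns (n : ℕ) (π π' : Equiv.Perm (Fin k)) (j : ℕ) : Equiv.Perm (Fin k) :=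
  if j + 1 = 2 * n then π' else if j % 2 = 0 then π else π.trans Fin.revPerm

theorem sum_alternatingColumns {n : ℕ} (hn : 1 ≤ n) (π π' : Equiv.Perm (Fin k)) (a : Fin k) :
    ∑ j : Fin (2 * n), (alternatingColumns n π π' j a : ℕ) =
      (n - 1) * (k - 1) + (π a + π' a) := by
  obtain ⟨n, rfl⟩ := Nat.exists_eq_add_of_le' hn
  have hpairs (t : ℕ) (ht : t ≤ n) :
      ∑ j ∈ range (2 * t), (alternatingColumns (n + 1) π π' j a : ℕ) = t * (k - 1) := by
    induction t with
    | zero => simp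
    | succ t ih =>
      have := (π a).is_lt
      rw [Nat.mul_succ, sum_range_succ, sum_range_succ, ih (by lia), Nat.add_mul]
      rw [alternatingColumns, alternatingColumns, if_neg (by lia), if_pos (by lia),
        if_neg (by lia), if_neg (by lia)]
      simp only [Equiv.trans_apply, Fin.revPerm_apply, Fin.val_rev]
      lia
  rw [Fin.sum_univ_eq_sum_range fun j => (alternatingColumns (n + 1) π π' j a : ℕ), Nat.mul_succ,
    sum_range_succ, sum_range_succ, hpairs n le_rfl]
  rw [alternatingColumns, alternatingColumns, if_neg (by lia), if_pos (by lia), if_pos (by lia)]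
  lia

end Cross

section PathJoinComplete

variable {m n : ℕ}

/-- The last column of cross labels: the reverse of the zigzag order in which the even vertices and
the endpoint `2 * m - 1` have been permuted cyclically. -/
def lastColumn (hm : 1 ≤ m) : Equiv.Perm (Fin (2 * m)) :=
  (zigzagPerm (2 * m)).trans ((Fin.cycleRange ⟨m, by lia⟩).trans Fin.revPerm)

theorem lastColumn_apply (hm : 1 ≤ m) (a : Fin (2 * m)) :
    (lastColumn hm a : ℕ) =
      if (a : ℕ) % 2 = 0 then 2 * m - 2 - a / 2
      else if (a : ℕ) = 2 * m - 1 then 2 * m - 1 else a / 2 := by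
  have hz := zigzagPerm_apply a
  unfold zigzag at hz
  simp only [lastColumn, Equiv.trans_apply, Fin.revPerm_apply, Fin.val_rev]
  split_ifs at hz ⊢ with heven hlast
  · rw [Fin.coe_cycleRange_of_lt (Fin.lt_def.2 (by lia))]
    lia
  · rw [Fin.coe_cycleRange_of_le (Fin.le_def.2 (by lia)), if_pos (Fin.ext (by lia))]
  · rw [Fin.cycleRange_of_gt (Fin.lt_def.2 (by lia))]
    lia

theorem vertexWeight_pathLabeling_add_zigzag_add_lastColumn (hm : 1 ≤ m) (a : Fin (2 * m)) :
    vertexWeight (pathGraph (2 * m)) (pathLabeling (2 * m)) a +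
        (zigzagPerm (2 * m) a + lastColumn hm a) =
      if (a : ℕ) % 2 = 0 then 4 * m - 3 else 4 * m - 1 := by
  unfold pathLabeling
  rw [vertexWeight_pathGraph fun i => 2 * m - 1 - zigzag (2 * m - 1) i, zigzagPerm_apply,
    lastColumn_apply]
  unfold zigzag
  split_ifs <;> lia

/-- The order of the cross labels at each vertex of `K_{2n}`. -/
def crossColumn (n : ℕ) (hm : 1 ≤ m) (b : Fin (2 * n)) : Equiv.Perm (Fin (2 * m)) :=
  alternatingColumns n (zigzagPerm (2 * m)) (lastColumn hm) b

/-- The graph `P_{2m} ∨ K_{2n}`. -/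
abbrev pathJoinComplete (m n : ℕ) : SimpleGraph (Fin (2 * m) ⊕ Fin (2 * n)) :=
  joinG (pathGraph (2 * m)) ⊤

/-- The local antimagic labeling of `P_{2m} ∨ K_{2n}`: the path edges get the smallest labels, then
come the cross edges, and the edges of the complete graph get the largest labels. -/
def pathJoinCompleteLabeling (n : ℕ) (hm : 1 ≤ m) : Sym2 (Fin (2 * m) ⊕ Fin (2 * n)) → ℕ :=
  joinLabeling (pathLabeling (2 * m))
    (crossLabeling (2 * m - 1) (crossColumn n hm))
    (completeLabeling (2 * n) (2 * m - 1 + 2 * n * (2 * m)))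

theorem bijOn_pathJoinCompleteLabeling (n : ℕ) (hm : 1 ≤ m) :
    Set.BijOn (pathJoinCompleteLabeling n hm) (pathJoinComplete m n).edgeSet
      (Set.Ioc 0 (2 * m - 1 + 2 * n * (2 * m) + (2 * n).choose 2)) := by
  have h := bijOn_joinLabeling (bijOn_pathLabeling (2 * m))
    (bijOn_crossLabeling (2 * m - 1) (crossColumn n hm))
    (bijOn_completeLabeling (2 * n) (2 * m - 1 + 2 * n * (2 * m)))
  rw [Set.Ioc_union_Ioc_eq_Ioc (by lia) (by lia), Set.Ioc_union_Ioc_eq_Ioc (by lia) (by lia)] at h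
  exact h (Set.Ioc_disjoint_Ioc_of_le le_rfl) (Set.Ioc_disjoint_Ioc_of_le le_rfl)

theorem exists_vertexWeight_pathJoinCompleteLabeling_inl (hm : 1 ≤ m) (hn : 1 ≤ n) :
    ∃ D, ∀ a : Fin (2 * m),
      vertexWeight (pathJoinComplete m n) (pathJoinCompleteLabeling n hm) (Sum.inl a) =
        D + if (a : ℕ) % 2 = 0 then 4 * m - 3 else 4 * m - 1 := by
  refine ⟨∑ b : Fin (2 * n), (2 * m - 1 + 2 * m * b + 1) + (n - 1) * (2 * m - 1), fun a => ?_⟩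
  have hrow : ∑ b, crossLabeling (2 * m - 1) (crossColumn n hm) a b =
      ∑ b : Fin (2 * n), (2 * m - 1 + 2 * m * b + 1) +
        ((n - 1) * (2 * m - 1) + (zigzagPerm (2 * m) a + lastColumn hm a)) := by
    rw [← sum_alternatingColumns hn, ← sum_add_distrib]
    exact sum_congr rfl fun b _ => by unfold crossLabeling crossColumn; ring
  rw [pathJoinCompleteLabeling, vertexWeight_joinLabeling_inl, hrow,
    ← vertexWeight_pathLabeling_add_zigzag_add_lastColumn hm a]
  ring

theorem vertexWeight_pathJoinCompleteLabeling_inl_lt_inr (hm : 1 ≤ m) (hn : 1 ≤ n)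
    (a : Fin (2 * m)) (b : Fin (2 * n)) :
    vertexWeight (pathJoinComplete m n) (pathJoinCompleteLabeling n hm) (Sum.inl a) <
      vertexWeight (pathJoinComplete m n) (pathJoinCompleteLabeling n hm) (Sum.inr b) := by
  have : Nontrivial (Fin (2 * m)) := Fin.nontrivial_iff_two_le.2 (by lia)
  have : Nontrivial (Fin (2 * n)) := Fin.nontrivial_iff_two_le.2 (by lia)
  have hcross (a : Fin (2 * m)) (b : Fin (2 * n)) :=
    (bijOn_crossLabeling (2 * m - 1) (crossColumn n hm)).mapsTo (Set.mem_univ (a, b))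
  refine vertexWeight_joinLabeling_inl_lt_inr (fun a a' b => ?_) (fun a b e he => ?_) a b
  · have h := (hcross a' b).1
    rw [Function.uncurry_apply_pair] at h
    exact (vertexWeight_pathLabeling_le a).trans (by lia)
  · exact (hcross a b).2.trans_lt ((bijOn_completeLabeling _ _).mapsTo he).1

theorem strictMono_vertexWeight_pathJoinCompleteLabeling_inr (n : ℕ) (hm : 1 ≤ m) :
    StrictMono fun b : Fin (2 * n) =>
      vertexWeight (pathJoinComplete m n) (pathJoinCompleteLabeling n hm) (Sum.inr b) := by
  intro b b' hb
  simp only [pathJoinCompleteLabeling, vertexWeight_joinLabeling_inr]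
  refine add_lt_add_of_lt_of_le (sum_lt_sum_of_nonempty ⟨⟨0, by lia⟩, mem_univ _⟩ fun a _ => ?_)
    (vertexWeight_completeLabeling_mono _ _ hb.le)
  exact crossLabeling_lt_crossLabeling _ _ a hb

theorem isLocalAntimagic_pathJoinCompleteLabeling (hm : 1 ≤ m) (hn : 1 ≤ n) :
    IsLocalAntimagic (pathJoinComplete m n) (pathJoinCompleteLabeling n hm) := by
  refine isLocalAntimagic_of_bijOn_Ioc (bijOn_pathJoinCompleteLabeling n hm) ?_
  rintro (a | b) (a' | b') hadj
  · obtain ⟨D, hD⟩ := exists_vertexWeight_pathJoinCompleteLabeling_inl hm hn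
    rw [joinG_adj_inl_inl, pathGraph_adj] at hadj
    rw [hD, hD]
    split_ifs <;> lia
  · exact (vertexWeight_pathJoinCompleteLabeling_inl_lt_inr hm hn a b').ne
  · exact (vertexWeight_pathJoinCompleteLabeling_inl_lt_inr hm hn a' b).ne'
  · exact (strictMono_vertexWeight_pathJoinCompleteLabeling_inr n hm).injective.ne
      (joinG_adj_inr_inr.1 hadj)

theorem colorCount_pathJoinCompleteLabeling_le (hm : 1 ≤ m) (hn : 1 ≤ n) :
    colorCount (pathJoinComplete m n) (pathJoinCompleteLabeling n hm) ≤ 2 * n + 2 := by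
  obtain ⟨D, hD⟩ := exists_vertexWeight_pathJoinCompleteLabeling_inl hm hn
  have himage : (univ.image fun a => vertexWeight (pathJoinComplete m n)
      (pathJoinCompleteLabeling n hm) (Sum.inl a)) ⊆ {D + (4 * m - 3), D + (4 * m - 1)} := by
    simp only [image_subset_iff, hD]
    intro a _
    split_ifs <;> simp
  grw [colorCount_sum_le, himage, card_le_two, Fintype.card_fin, add_comm]

end PathJoinComplete

/-- Theorem: For all integers `m, n ≥ 1`, `χ_la(P_{2m} ∨ K_{2n}) = 2n + 2`. -/
theorem chiLA_path_join_completeEven (m n : ℕ) (hm : 1 ≤ m) (hn : 1 ≤ n) :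
    chiLA (joinG (pathGraph (2 * m)) (⊤ : SimpleGraph (Fin (2 * n)))) = 2 * n + 2 := by
  have hpath : (pathGraph (2 * m)).IsNClique 2 {⟨0, by lia⟩, ⟨1, by lia⟩} := by
    simp [isNClique_iff, pathGraph_adj]
  have hcomplete : (⊤ : SimpleGraph (Fin (2 * n))).IsNClique (2 * n) univ := by
    simp [isNClique_iff]
  rw [add_comm]
  exact chiLA_eq_of_isNClique (isNClique_joinG_disjSum hpath hcomplete)
    (isLocalAntimagic_pathJoinCompleteLabeling hm hn)
    (by rw [add_comm]; exact colorCount_pathJoinCompleteLabeling_le hm hn)
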